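/- arXiv:2503.08994 — 2 statements merged into one kernel-verified Lean document; each statement's English description precedes it below -/
import Mathlib

section
/- Let T_l and T_r be finite types (tables) with key maps key_l : T_l → V and key_r : T_r → V into a finite linearly ordered type V, and decidable predicates Q_l : T_l → Prop, Q_r : T_r → Prop. Write c_l(v, Q_l) = |{t ∈ T_l : key_l(t) = v ∧ Q_l(t)}| and c_r(w, Q_r) = |{t ∈ T_r : key_r(t) = w ∧ Q_r(t)}|. Then the cardinality of the non-equi join with condition key_l ≥ key_r, filtered by the predicates, satisfies |{(l, r) ∈ T_l × T_r : key_l(l) ≥ key_r(r) ∧ Q_l(l) ∧ Q_r(r)}| = Σ_{v ∈ V} c_l(v, Q_l) · (Σ_{w ∈ V, w ≤ v} c_r(w, Q_r)). -/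
/-- **Non-equi (`≥`) join cardinality via cumulative sums.** The cardinality of the
predicate-filtered join `{(l, r) : key_l(l) ≥ key_r(r) ∧ Q_l(l) ∧ Q_r(r)}` equals
`Σ_v c_l(v, Q_l) · (Σ_{w ≤ v} c_r(w, Q_r))`. -/
theorem stmt_5 {V : Type*} [Fintype V] [LinearOrder V]
    {Tl Tr : Type*} [Fintype Tl] [Fintype Tr]
    (keyl : Tl → V) (keyr : Tr → V)
    (Ql : Tl → Prop) [DecidablePred Ql] (Qr : Tr → Prop) [DecidablePred Qr] :
    Fintype.card {p : Tl × Tr // keyr p.2 ≤ keyl p.1 ∧ Ql p.1 ∧ Qr p.2}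
      = ∑ v : V, Fintype.card {x : Tl // keyl x = v ∧ Ql x}
          * ∑ w ∈ Finset.univ.filter (fun w => w ≤ v),
              Fintype.card {y : Tr // keyr y = w ∧ Qr y} := by
  have inner : ∀ v : V, ∑ w ∈ Finset.univ.filter (fun w => w ≤ v),
      Fintype.card {y : Tr // keyr y = w ∧ Qr y}
      = ∑ y : Tr, if keyr y ≤ v ∧ Qr y then 1 else 0 := by
    intro v
    simp only [Fintype.card_subtype, Finset.card_filter]
    rw [Finset.sum_comm]
    refine Finset.sum_congr rfl fun y _ => ?_
    by_cases h : Qr y <;> simp [h, Finset.sum_ite_eq]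
  simp only [inner]
  simp only [Fintype.card_subtype, Finset.card_filter]
  rw [Fintype.sum_prod_type]
  simp only [Finset.sum_mul]
  symm
  rw [Finset.sum_comm]
  refine Finset.sum_congr rfl fun x _ => ?_
  rw [Finset.sum_eq_single (keyl x)]
  · by_cases h : Ql x <;> simp [h]
  · intro v _ hv
    simp [hv.symm]
  · simp
end

section
/- Let T_l and T_r be finite types (tables) with key maps key_l : T_l → V, key_r : T_r → V into a finite linearly ordered type V, decidable predicates Q_l, Q_r, and positive sizes N_l = |T_l|, N_r = |T_r|. Define p_l(v, Q_l) = |{t ∈ T_l : key_l(t) = v ∧ Q_l(t)}|/N_l and p_r(w, Q_r) analogously, with p_l(v), p_r(w) the versions with trivially-true predicates, and let card_{J≥} = Σ_{v ∈ V} c_l(v) · Σ_{w ≤ v} c_r(w) be the cardinality of the unfiltered ≥-join. If card_{J≥} > 0, then the cardinality of the predicate-filtered ≥-join equals card_{J≥} · (Σ_{v ∈ V} p_l(v, Q_l) · Σ_{w ≤ v} p_r(w, Q_r)) / (Σ_{v ∈ V} p_l(v) · Σ_{w ≤ v} p_r(w)). -/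
/-- **Exactness of DistJoin's selectivity-based cardinality inference for `≥`-joins.**
With exact per-table probabilities `p(v, Q) = c(v, Q)/N` and unfiltered `≥`-join cardinality
`card_{J≥} = Σ_v c_l(v) · Σ_{w ≤ v} c_r(w) > 0`, the predicate-filtered `≥`-join cardinality
equals `card_{J≥} · (Σ_v p_l(v, Q_l) · Σ_{w ≤ v} p_r(w, Q_r)) / (Σ_v p_l(v) · Σ_{w ≤ v} p_r(w))`. -/
theorem stmt_7 {V : Type*} [Fintype V] [LinearOrder V]
    {Tl Tr : Type*} [Fintype Tl] [Fintype Tr]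
    (keyl : Tl → V) (keyr : Tr → V)
    (Ql : Tl → Prop) [DecidablePred Ql] (Qr : Tr → Prop) [DecidablePred Qr]
    (hNl : 0 < Fintype.card Tl) (hNr : 0 < Fintype.card Tr)
    (hJ : 0 < ∑ v : V, Fintype.card {x : Tl // keyl x = v}
        * ∑ w ∈ Finset.univ.filter (fun w => w ≤ v), Fintype.card {y : Tr // keyr y = w}) :
    (Fintype.card {p : Tl × Tr // keyr p.2 ≤ keyl p.1 ∧ Ql p.1 ∧ Qr p.2} : ℝ)
      = ((∑ v : V, Fintype.card {x : Tl // keyl x = v}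
            * ∑ w ∈ Finset.univ.filter (fun w => w ≤ v),
                Fintype.card {y : Tr // keyr y = w} : ℕ) : ℝ)
        * (∑ v : V, (Fintype.card {x : Tl // keyl x = v ∧ Ql x} : ℝ) / (Fintype.card Tl : ℝ)
            * ∑ w ∈ Finset.univ.filter (fun w => w ≤ v),
                (Fintype.card {y : Tr // keyr y = w ∧ Qr y} : ℝ) / (Fintype.card Tr : ℝ))
        / (∑ v : V, (Fintype.card {x : Tl // keyl x = v} : ℝ) / (Fintype.card Tl : ℝ)
            * ∑ w ∈ Finset.univ.filter (fun w => w ≤ v),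
                (Fintype.card {y : Tr // keyr y = w} : ℝ) / (Fintype.card Tr : ℝ)) := by
  have hA : Fintype.card {p : Tl × Tr // keyr p.2 ≤ keyl p.1 ∧ Ql p.1 ∧ Qr p.2}
      = ∑ v : V, Fintype.card {x : Tl // keyl x = v ∧ Ql x}
        * ∑ w ∈ Finset.univ.filter (fun w => w ≤ v),
            Fintype.card {y : Tr // keyr y = w ∧ Qr y} := by
    have hr : ∀ v : V, ∑ w ∈ Finset.univ.filter (fun w => w ≤ v),
        Fintype.card {y : Tr // keyr y = w ∧ Qr y}
        = (Finset.univ.filter (fun y : Tr => keyr y ≤ v ∧ Qr y)).card := by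
      intro v
      rw [Finset.card_eq_sum_card_fiberwise (f := keyr)
        (t := Finset.univ.filter (fun w => w ≤ v))]
      · refine Finset.sum_congr rfl fun w hw => ?_
        rw [Fintype.card_subtype, Finset.filter_filter]
        congr 1
        ext y
        simp only [Finset.mem_filter, Finset.mem_univ, true_and] at hw ⊢
        grind
      · intro y hy
        simp at hy ⊢
        exact hy.1
    simp only [hr]
    rw [Fintype.card_subtype, Finset.card_eq_sum_card_fiberwise
      (f := fun p : Tl × Tr => keyl p.1) (t := Finset.univ) (fun _ _ => by simp)]
    refine Finset.sum_congr rfl fun v _ => ?_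
    rw [Fintype.card_subtype, ← Finset.card_product, Finset.filter_filter]
    congr 1
    ext p
    simp only [Finset.mem_filter, Finset.mem_univ, true_and, Finset.mem_product]
    grind
  have hf : ∀ (a b : V → ℝ) (N M : ℝ),
      ∑ v : V, a v / N * ∑ w ∈ Finset.univ.filter (fun w => w ≤ v), b w / M
      = (∑ v : V, a v * ∑ w ∈ Finset.univ.filter (fun w => w ≤ v), b w) / (N * M) := by
    intro a b N M
    rw [Finset.sum_div]
    refine Finset.sum_congr rfl fun v _ => ?_
    rw [← Finset.sum_div, div_mul_div_comm]
  have hJ' : (0 : ℝ) < ((∑ v : V, Fintype.card {x : Tl // keyl x = v}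
        * ∑ w ∈ Finset.univ.filter (fun w => w ≤ v),
            Fintype.card {y : Tr // keyr y = w} : ℕ) : ℝ) := by exact_mod_cast hJ
  have hl : (0 : ℝ) < Fintype.card Tl := by exact_mod_cast hNl
  have hr : (0 : ℝ) < Fintype.card Tr := by exact_mod_cast hNr
  rw [hA, hf (fun v => (Fintype.card {x : Tl // keyl x = v ∧ Ql x} : ℝ))
    (fun w => (Fintype.card {y : Tr // keyr y = w ∧ Qr y} : ℝ)),
    hf (fun v => (Fintype.card {x : Tl // keyl x = v} : ℝ))
    (fun w => (Fintype.card {y : Tr // keyr y = w} : ℝ))]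
  push_cast at hJ' ⊢
  generalize (∑ v : V, (Fintype.card {x : Tl // keyl x = v} : ℝ)
        * ∑ w ∈ Finset.univ.filter (fun w => w ≤ v),
            (Fintype.card {y : Tr // keyr y = w} : ℝ)) = J at hJ' ⊢
  have := hJ'.ne'
  field_simp
end
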